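/- arXiv:1112.3148 — 3 statements merged into one kernel-verified Lean document; each statement's English description precedes it below -/
import Mathlib

section
/- Suppose (i) there exist a constant c > 0 and a finite measure μ on E such that c⁻¹·μ(A) ≤ κ_1(x)(A) ≤ c·μ(A) for every x ∈ E and every measurable set A ⊆ E; (ii) for every T > 0 one has sup{ κ_t(x)(E) : x ∈ E, 0 ≤ t ≤ T } < ∞; and (iii) there exists a point x₀ ∈ E with ∑_{n=0}^∞ κ_n(x₀)(E) < ∞. Then there exist constants K > 0 and β > 0 such that κ_t(x)(E) ≤ K·e^{−βt} for all x ∈ E and all t ≥ 0. -/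
open MeasureTheory Set
open scoped ENNReal

/-- If a measurable semigroup of finite kernels `κ_t` on `E` satisfies:
(i) `κ_1` is two-sided comparable to a fixed finite measure `μ`,
(ii) the total masses `κ_t(x)(E)` are bounded on bounded time intervals, and
(iii) `∑_{n=0}^∞ κ_n(x₀)(E) < ∞` for some point `x₀`,
then the total mass decays exponentially, uniformly in `x`. -/
theorem exp_decay_of_comparable_and_summable
    {E : Type*} [MeasurableSpace E]
    (κ : ℝ → E → Measure E)
    (hfin : ∀ t : ℝ, 0 ≤ t → ∀ x, IsFiniteMeasure (κ t x))
    (hmeas : ∀ A : Set E, MeasurableSet A →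
      Measurable (fun p : ℝ × E => κ p.1 p.2 A))
    (hsemi : ∀ s t : ℝ, 0 ≤ s → 0 ≤ t → ∀ x, ∀ A : Set E, MeasurableSet A →
      κ (s + t) x A = ∫⁻ y, κ s y A ∂(κ t x))
    -- (i) two-sided comparability of `κ_1` with a fixed finite measure
    (hi : ∃ (c : ℝ≥0∞) (μ : Measure E), 0 < c ∧ c ≠ ⊤ ∧ IsFiniteMeasure μ ∧
      ∀ x : E, ∀ A : Set E, MeasurableSet A →
        c⁻¹ * μ A ≤ κ 1 x A ∧ κ 1 x A ≤ c * μ A)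
    -- (ii) boundedness of total mass on bounded time intervals
    (hii : ∀ T : ℝ, 0 < T → ∃ M : ℝ≥0∞, M ≠ ⊤ ∧
      ∀ x : E, ∀ t : ℝ, 0 ≤ t → t ≤ T → κ t x univ ≤ M)
    -- (iii) summability of the total masses at integer times at some point
    (hiii : ∃ x₀ : E, (∑' n : ℕ, κ (n : ℝ) x₀ univ) ≠ ⊤) :
    ∃ (K β : ℝ), 0 < K ∧ 0 < β ∧
      ∀ x : E, ∀ t : ℝ, 0 ≤ t →
        (κ t x univ).toReal ≤ K * Real.exp (-β * t) := by
  obtain ⟨c, μ, hc0, hct, -, hcμ⟩ := hi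
  obtain ⟨x₀, hx₀⟩ := hiii
  have hdom : ∀ x, κ 1 x ≤ (c * c) • κ 1 x₀ := by
    intro x
    refine Measure.le_iff.2 fun A hA => ?_
    have h1 := (hcμ x A hA).2
    have h2 := (hcμ x₀ A hA).1
    have h3 : μ A ≤ c * κ 1 x₀ A := by
      calc μ A = c * (c⁻¹ * μ A) := by
            rw [← mul_assoc, ENNReal.mul_inv_cancel hc0.ne' hct, one_mul]
        _ ≤ _ := by gcongr
    calc κ 1 x A ≤ c * μ A := h1
      _ ≤ c * (c * κ 1 x₀ A) := by gcongr
      _ = ((c * c) • κ 1 x₀) A := by simp [mul_assoc]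
  have hcomp : ∀ (n : ℕ) (x : E),
      κ ((n + 1 : ℕ) : ℝ) x univ ≤ (c * c) * κ ((n + 1 : ℕ) : ℝ) x₀ univ := by
    intro n x
    push_cast
    rw [hsemi n 1 n.cast_nonneg zero_le_one x univ MeasurableSet.univ,
      hsemi n 1 n.cast_nonneg zero_le_one x₀ univ MeasurableSet.univ]
    calc _ ≤ ∫⁻ y, κ n y univ ∂((c * c) • κ 1 x₀) := lintegral_mono' (hdom x) le_rfl
      _ = _ := by rw [lintegral_smul_measure, smul_eq_mul]
  have hcc : c * c ≠ ⊤ := ENNReal.mul_ne_top hct hct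
  have htend : Filter.Tendsto (fun n : ℕ => (c * c) * κ ((n + 1 : ℕ) : ℝ) x₀ univ)
      Filter.atTop (nhds 0) := by
    have h := (ENNReal.tendsto_atTop_zero_of_tsum_ne_top hx₀)
    have h' := (Filter.tendsto_add_atTop_iff_nat 1).2 h
    have := ENNReal.Tendsto.const_mul (a := c * c) h' (Or.inr hcc)
    simpa using this
  obtain ⟨n, hn⟩ := (htend.eventually (ge_mem_nhds (show (0 : ℝ≥0∞) < 2⁻¹ by simp))).exists
  obtain ⟨N, hN⟩ : ∃ N : ℝ, N = ((n + 1 : ℕ) : ℝ) := ⟨_, rfl⟩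
  have hNpos : 0 < N := by rw [hN]; positivity
  have hhalf : ∀ x, κ N x univ ≤ 2⁻¹ := fun x => by
    rw [hN]; exact (hcomp n x).trans hn
  obtain ⟨M, hM, hMb⟩ := hii N hNpos
  have hiter : ∀ (k : ℕ) (r : ℝ), 0 ≤ r → r ≤ N → ∀ x,
      κ (k * N + r) x univ ≤ M * 2⁻¹ ^ k := by
    intro k r hr hrN
    induction k with
    | zero => intro x; simpa using hMb x r hr hrN
    | succ k ih =>
      intro x
      have e : ((k + 1 : ℕ) : ℝ) * N + r = (k * N + r) + N := by push_cast; ring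
      rw [e, hsemi _ N (by positivity) hNpos.le x univ MeasurableSet.univ]
      calc _ ≤ ∫⁻ _, M * 2⁻¹ ^ k ∂(κ N x) := lintegral_mono ih
        _ = M * 2⁻¹ ^ k * κ N x univ := lintegral_const _
        _ ≤ M * 2⁻¹ ^ k * 2⁻¹ := by gcongr; exact hhalf x
        _ = _ := by rw [pow_succ, mul_assoc]
  refine ⟨2 * (M.toReal + 1), Real.log 2 / N, by positivity,
    div_pos (Real.log_pos one_lt_two) hNpos, fun x t ht => ?_⟩
  have hk1 := Nat.floor_le (div_nonneg ht hNpos.le)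
  have hk2 := Nat.lt_floor_add_one (t / N)
  generalize ⌊t / N⌋₊ = k at hk1 hk2
  have hk1' : k * N ≤ t := (le_div_iff₀ hNpos).1 hk1
  have hk2' : t < (k + 1) * N := (div_lt_iff₀ hNpos).1 hk2
  have hb := hiter k (t - k * N) (by linarith) (by linarith) x
  rw [add_sub_cancel] at hb
  have hb2 : (κ t x univ).toReal ≤ M.toReal * 2⁻¹ ^ k := by
    have := ENNReal.toReal_mono (ENNReal.mul_ne_top hM (by simp)) hb
    simpa using this
  have hexp : (2⁻¹ : ℝ) ^ k ≤ 2 * Real.exp (-(Real.log 2 / N) * t) := by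
    have h1 : (2⁻¹ : ℝ) ^ k = 2 * Real.exp (-Real.log 2 * (k + 1)) := by
      have : -Real.log 2 * ((k : ℝ) + 1) = ((k + 1 : ℕ) : ℝ) * (-Real.log 2) := by
        push_cast; ring
      rw [this, Real.exp_nat_mul, Real.exp_neg, Real.exp_log two_pos, pow_succ]
      ring
    rw [h1]
    have h2 : -(Real.log 2 / N) * t = -Real.log 2 * (t / N) := by ring
    rw [h2]
    have := Real.log_pos one_lt_two
    gcongr 2 * Real.exp ?_
    nlinarith
  calc _ ≤ M.toReal * 2⁻¹ ^ k := hb2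
    _ ≤ (M.toReal + 1) * (2 * Real.exp (-(Real.log 2 / N) * t)) := by
        gcongr; linarith
    _ = _ := by ring
end

section
/- Let (Ω, 𝓕, (𝓕_s)_{s≥0}, P) be a filtered probability space and let 0 ≤ t₀ < T < ∞. Let h : [0,T] × Ω → ℝ be progressively measurable with ∫_{t₀}^T |h_r| dr < ∞ almost surely, and let g : [0,T] × Ω → ℝ be an adapted process whose paths are almost surely continuous on [t₀, T], such that E[ (sup_{t₀ ≤ s ≤ T} |g_s|) · exp(∫_{t₀}^T |h_r| dr) ] < ∞. Suppose that for every s ∈ [t₀, T], g_s = E[ g_T − ∫_s^T h_r g_r dr | 𝓕_s ] almost surely. Then for every s ∈ [t₀, T], g_s = E[ g_T · exp(−∫_s^T h_r dr) | 𝓕_s ] almost surely. -/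
open MeasureTheory Set
open scoped MeasureTheory

lemma ac_exp {f : ℝ → ℝ} {a b : ℝ} (hf : AbsolutelyContinuousOnInterval f a b) :
    AbsolutelyContinuousOnInterval (fun x => Real.exp (f x)) a b := by
  obtain ⟨C, hC⟩ := hf.exists_bound
  have hC0 : 0 ≤ C := le_trans (norm_nonneg _) (hC a (by simp))
  obtain ⟨K, hK⟩ : ∃ K, LipschitzOnWith K Real.exp (Icc (-C) C) :=
    (Real.contDiff_exp.contDiffOn (n := 1)).exists_lipschitzOnWith (by decide)
      (convex_Icc _ _) isCompact_Icc
  rw [absolutelyContinuousOnInterval_iff] at hf ⊢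
  intro ε hε
  obtain ⟨δ, hδ, h⟩ := hf (ε / (K + 1)) (by positivity)
  refine ⟨δ, hδ, fun E hE hEδ => ?_⟩
  have h1 := h E hE hEδ
  have hmem : ∀ x ∈ uIcc a b, f x ∈ Icc (-C) C := fun x hx => by
    have := hC x hx
    rw [Real.norm_eq_abs, abs_le] at this
    exact this
  calc _ ≤ ∑ i ∈ Finset.range E.1, (K : ℝ) * dist (f (E.2 i).1) (f (E.2 i).2) := by
        refine Finset.sum_le_sum fun i hi => ?_
        have h2 := hE.1 i hi
        exact hK.dist_le_mul _ (hmem _ h2.1) _ (hmem _ h2.2)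
    _ = K * ∑ i ∈ Finset.range E.1, dist (f (E.2 i).1) (f (E.2 i).2) := by rw [Finset.mul_sum]
    _ ≤ K * (ε / (K + 1)) := by gcongr
    _ < ε := by
        have : (0:ℝ) ≤ K := K.2
        rw [mul_div_assoc', div_lt_iff₀ (by positivity)]
        nlinarith

lemma ac_ftc {F F' : ℝ → ℝ} {a b : ℝ} (hF : AbsolutelyContinuousOnInterval F a b)
    (hd : ∀ᵐ x, x ∈ uIcc a b → HasDerivAt F (F' x) x) :
    IntervalIntegrable F' volume a b ∧ ∫ x in a..b, F' x = F b - F a := by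
  have e : ∀ᵐ x, x ∈ uIoc a b → deriv F x = F' x := by
    filter_upwards [hd] with x hx hx'
    exact (hx (uIoc_subset_uIcc hx')).deriv
  constructor
  · refine hF.intervalIntegrable_deriv.congr_ae ?_
    exact (ae_restrict_iff' measurableSet_uIoc).2 e
  · rw [← hF.integral_deriv_eq_sub]
    exact (intervalIntegral.integral_congr_ae e).symm

lemma ac_const (c a b : ℝ) : AbsolutelyContinuousOnInterval (fun _ => c) a b :=
  (contDiffOn_const : ContDiffOn ℝ 1 (fun _ : ℝ => c) (uIcc a b)).absolutelyContinuousOnInterval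

lemma path_bound {f : ℝ → ℝ} {s T : ℝ} (hf : IntervalIntegrable f volume s T) :
    IntervalIntegrable (fun r => |f r| * Real.exp (∫ u in s..r, |f u|) *
      (2 + (∫ u in s..T, |f u|) - ∫ u in s..r, |f u|)) volume s T ∧
    ∫ r in s..T, |f r| * Real.exp (∫ u in s..r, |f u|) *
      (2 + (∫ u in s..T, |f u|) - ∫ u in s..r, |f u|) =
      3 * Real.exp (∫ u in s..T, |f u|) - 3 - ∫ u in s..T, |f u| := by
  have ha := hf.abs.absolutelyContinuousOnInterval_intervalIntegral (c := s) (by simp)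
  have hF := (ac_exp ha).mul ((ac_const (3 + ∫ u in s..T, |f u|) s T).sub ha)
  have := ac_ftc (F' := fun r => |f r| * Real.exp (∫ u in s..r, |f u|) *
      (2 + (∫ u in s..T, |f u|) - ∫ u in s..r, |f u|)) hF (by
    filter_upwards [hf.abs.ae_hasDerivAt_integral] with x hx hx'
    have h1 := hx hx' s (by simp)
    refine (h1.exp.mul (h1.const_sub (3 + ∫ u in s..T, |f u|))).congr_deriv ?_
    ring)
  refine ⟨this.1, this.2.trans ?_⟩
  simp
  ring

lemma path_id {f G : ℝ → ℝ} {s T : ℝ} (hf : IntervalIntegrable f volume s T)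
    (hG : Continuous G) :
    IntervalIntegrable (fun r => f r * Real.exp (-∫ u in s..r, f u) *
      (G T - (∫ u in r..T, f u * G u) - G r)) volume s T ∧
    ∫ r in s..T, f r * Real.exp (-∫ u in s..r, f u) *
      (G T - (∫ u in r..T, f u * G u) - G r) =
      (G T - ∫ u in s..T, f u * G u) - G T * Real.exp (-∫ u in s..T, f u) := by
  have hfG : IntervalIntegrable (fun u => f u * G u) volume s T :=
    hf.mul_continuousOn hG.continuousOn
  have ha := hf.absolutelyContinuousOnInterval_intervalIntegral (c := s) (by simp)
  have hb := hfG.absolutelyContinuousOnInterval_intervalIntegral (c := T) (by simp)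
  have hF := ((ac_exp ha.neg).mul ((ac_const (G T) s T).add hb)).neg
  have := ac_ftc (F' := fun r => f r * Real.exp (-∫ u in s..r, f u) *
      (G T - (∫ u in r..T, f u * G u) - G r)) hF (by
    filter_upwards [hf.ae_hasDerivAt_integral, hfG.ae_hasDerivAt_integral] with x hx hy hx'
    have h1 := hx hx' s (by simp)
    have h2 := hy hx' T (by simp)
    refine (h1.neg.exp.mul (h2.const_add (G T))).neg.congr_deriv ?_
    rw [intervalIntegral.integral_symm T x]
    simp
    ring)
  refine ⟨this.1, this.2.trans ?_⟩
  simp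
  rw [intervalIntegral.integral_symm s T]
  ring

lemma path_phi {f G : ℝ → ℝ} {s r T S : ℝ} (hr : r ∈ Icc s T)
    (hf : IntervalIntegrable f volume s T) (hS : ∀ r ∈ Icc s T, |G r| ≤ S) :
    |∫ u in r..T, f u * G u| ≤ S * ((∫ u in s..T, |f u|) - ∫ u in s..r, |f u|) := by
  have hsub : uIcc s r ⊆ uIcc s T := by
    rw [uIcc_of_le hr.1, uIcc_of_le (hr.1.trans hr.2)]; exact Icc_subset_Icc le_rfl hr.2
  have hsub' : uIcc r T ⊆ uIcc s T := by
    rw [uIcc_of_le hr.2, uIcc_of_le (hr.1.trans hr.2)]; exact Icc_subset_Icc hr.1 le_rfl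
  rw [intervalIntegral.integral_interval_sub_left hf.abs (hf.abs.mono_set hsub)]
  rw [← intervalIntegral.integral_const_mul, ← Real.norm_eq_abs]
  refine intervalIntegral.norm_integral_le_of_norm_le hr.2 ?_ ((hf.abs.mono_set hsub').const_mul S)
  refine Filter.Eventually.of_forall fun u hu => ?_
  rw [norm_mul, mul_comm, Real.norm_eq_abs, Real.norm_eq_abs]
  exact mul_le_mul_of_nonneg_right (hS u ⟨hr.1.trans hu.1.le, hu.2⟩) (abs_nonneg _)

lemma path_norm {f G : ℝ → ℝ} {s T S : ℝ} (hsT : s ≤ T) (hf : IntervalIntegrable f volume s T)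
    (hG : Continuous G) (hS : ∀ r ∈ Icc s T, |G r| ≤ S) :
    ∫ r in s..T, |f r * Real.exp (-∫ u in s..r, f u) *
      (G T - (∫ u in r..T, f u * G u) - G r)| ≤ 3 * (S * Real.exp (∫ u in s..T, |f u|)) := by
  have hS0 : 0 ≤ S := (abs_nonneg _).trans (hS T ⟨hsT, le_rfl⟩)
  have hA : 0 ≤ ∫ u in s..T, |f u| :=
    intervalIntegral.integral_nonneg hsT fun _ _ => abs_nonneg _
  calc _ ≤ ∫ r in s..T, S * (|f r| * Real.exp (∫ u in s..r, |f u|) *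
      (2 + (∫ u in s..T, |f u|) - ∫ u in s..r, |f u|)) := by
        refine intervalIntegral.integral_mono_on hsT (path_id hf hG).1.abs
          ((path_bound hf).1.const_mul S) fun r hr => ?_
        have h1 := path_phi hr hf hS
        have h2 := hS r hr
        have h3 := hS T ⟨hsT, le_rfl⟩
        have h4 : -∫ u in s..r, f u ≤ ∫ u in s..r, |f u| :=
          (neg_le_abs _).trans (intervalIntegral.abs_integral_le_integral_abs hr.1)
        have h5 : |G T - (∫ u in r..T, f u * G u) - G r| ≤
            S * (2 + (∫ u in s..T, |f u|) - ∫ u in s..r, |f u|) := by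
          have := abs_sub (G T - (∫ u in r..T, f u * G u)) (G r)
          have := abs_sub (G T) (∫ u in r..T, f u * G u)
          linarith
        rw [abs_mul, abs_mul, Real.abs_exp]
        calc _ ≤ |f r| * Real.exp (∫ u in s..r, |f u|) *
              (S * (2 + (∫ u in s..T, |f u|) - ∫ u in s..r, |f u|)) := by gcongr
          _ = _ := by ring
    _ = S * (3 * Real.exp (∫ u in s..T, |f u|) - 3 - ∫ u in s..T, |f u|) := by
        rw [intervalIntegral.integral_const_mul, (path_bound hf).2]
    _ ≤ _ := by nlinarith

lemma meas_int {Ω : Type*} [MeasurableSpace Ω] {K : ℝ → Ω → ℝ}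
    (hK : Measurable (Function.uncurry K)) (a : ℝ) :
    StronglyMeasurable (fun p : ℝ × Ω => ∫ u in a..p.1, K u p.2) := by
  have key : ∀ A : Set ((ℝ × Ω) × ℝ), MeasurableSet A →
      StronglyMeasurable (fun p : ℝ × Ω => ∫ u, A.indicator (fun q => K q.2 q.1.2) (p, u)) := by
    intro A hA
    refine StronglyMeasurable.integral_prod_right ?_
    refine StronglyMeasurable.indicator ?_ hA
    exact (hK.comp (measurable_snd.prodMk (measurable_snd.comp measurable_fst))).stronglyMeasurable
  have h1 := key {q | a < q.2 ∧ q.2 ≤ q.1.1} (by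
    apply MeasurableSet.inter
    · exact measurableSet_lt measurable_const measurable_snd
    · exact measurableSet_le measurable_snd (measurable_fst.comp measurable_fst))
  have h2 := key {q | q.1.1 < q.2 ∧ q.2 ≤ a} (by
    apply MeasurableSet.inter
    · exact measurableSet_lt (measurable_fst.comp measurable_fst) measurable_snd
    · exact measurableSet_le measurable_snd measurable_const)
  convert h1.sub h2 using 2 with p
  simp only [intervalIntegral, Pi.sub_apply]
  rw [← integral_indicator measurableSet_Ioc, ← integral_indicator measurableSet_Ioc]
  rfl

theorem core {Ω : Type*} {m0 : MeasurableSpace Ω} (μ : Measure Ω) [IsProbabilityMeasure μ]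
    (ℱ : Filtration ℝ m0) (s T : ℝ) (hsT : s ≤ T) (H G : ℝ → Ω → ℝ)
    (hH : Measurable (Function.uncurry H)) (hG : Measurable (Function.uncurry G))
    (hGc : ∀ ω, Continuous fun r => G r ω) (S W : Ω → ℝ)
    (hS : ∀ᵐ ω ∂μ, ∀ r ∈ Icc s T, |G r ω| ≤ S ω)
    (hHi : ∀ᵐ ω ∂μ, IntervalIntegrable (fun r => H r ω) volume s T)
    (hW : Integrable W μ)
    (hSW : ∀ᵐ ω ∂μ, S ω * Real.exp (∫ r in s..T, |H r ω|) ≤ W ω)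
    (hHm : ∀ r ∈ Icc s T, StronglyMeasurable[ℱ r] (H r))
    (hZm : ∀ r ∈ Icc s T, StronglyMeasurable[ℱ r] (fun ω => ∫ u in s..r, H u ω))
    (hrec : ∀ r ∈ Icc s T, G r =ᵐ[μ] μ[fun ω => G T ω - ∫ u in r..T, H u ω * G u ω | ℱ r]) :
    G s =ᵐ[μ] μ[fun ω => G T ω * Real.exp (-∫ u in s..T, H u ω) | ℱ s] := by
  have hTm : T ∈ Icc s T := ⟨hsT, le_rfl⟩
  have hsm : s ∈ Icc s T := ⟨le_rfl, hsT⟩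
  have hGr : ∀ r, Measurable (G r) := fun r => hG.comp measurable_prodMk_left
  have hI : StronglyMeasurable (fun p : ℝ × Ω => ∫ u in p.1..T, H u p.2 * G u p.2) := by
    have := (meas_int (K := fun u ω => H u ω * G u ω) (hH.mul hG) T).neg
    convert this using 2 with p
    rw [intervalIntegral.integral_symm]; rfl
  have hZ := meas_int hH s
  have hIr : ∀ r, Measurable (fun ω => ∫ u in r..T, H u ω * G u ω) := fun r =>
    hI.measurable.comp measurable_prodMk_left
  have hGint : ∀ r ∈ Icc s T, Integrable (G r) μ := by
    intro r hr
    refine hW.mono' (hGr r).aestronglyMeasurable ?_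
    filter_upwards [hS, hSW] with ω h1 h2
    have h3 := h1 r hr
    have : 0 ≤ ∫ r in s..T, |H r ω| :=
      intervalIntegral.integral_nonneg hsT fun _ _ => abs_nonneg _
    have h4 := Real.add_one_le_exp (∫ r in s..T, |H r ω|)
    have h0 := abs_nonneg (G r ω)
    rw [Real.norm_eq_abs]
    nlinarith
  have hIint : ∀ r ∈ Icc s T, Integrable (fun ω => ∫ u in r..T, H u ω * G u ω) μ := by
    intro r hr
    refine hW.mono' (hIr r).aestronglyMeasurable ?_
    filter_upwards [hS, hSW, hHi] with ω h1 h2 h3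
    have h5 := path_phi hr h3 h1
    have : 0 ≤ ∫ u in s..r, |H u ω| :=
      intervalIntegral.integral_nonneg hr.1 fun _ _ => abs_nonneg _
    have h4 := Real.add_one_le_exp (∫ r in s..T, |H r ω|)
    have h0 := (abs_nonneg (G r ω)).trans (h1 r hr)
    rw [Real.norm_eq_abs]
    nlinarith
  have hΦint : ∀ r ∈ Icc s T,
      Integrable (fun ω => G T ω - ∫ u in r..T, H u ω * G u ω) μ := fun r hr =>
    (hGint T hTm).sub (hIint r hr)
  -- the integrand on the product space
  let F : ℝ → Ω → ℝ := fun r ω => H r ω * Real.exp (-∫ u in s..r, H u ω) *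
      (G T ω - (∫ u in r..T, H u ω * G u ω) - G r ω)
  have hFm : Measurable (Function.uncurry F) := by
    have e1 : Measurable (fun p : ℝ × Ω => G T p.2) := (hGr T).comp measurable_snd
    exact (hH.mul (Real.measurable_exp.comp hZ.measurable.neg)).mul
      ((e1.sub hI.measurable).sub hG)
  have hFint : Integrable (Function.uncurry F) ((volume.restrict (Ioc s T)).prod μ) := by
    rw [integrable_prod_iff' hFm.aestronglyMeasurable]
    constructor
    · filter_upwards [hHi] with ω h1
      have := (path_id h1 (hGc ω)).1
      rwa [intervalIntegrable_iff_integrableOn_Ioc_of_le hsT] at this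
    · refine (hW.const_mul 3).mono' ?_ ?_
      · exact (hFm.norm.stronglyMeasurable.integral_prod_left').aestronglyMeasurable
      · filter_upwards [hHi, hS, hSW] with ω h1 h2 h3
        rw [Real.norm_of_nonneg (integral_nonneg fun _ => norm_nonneg _)]
        have := path_norm hsT h1 (hGc ω) h2
        rw [intervalIntegral.integral_of_le hsT] at this
        exact this.trans (by linarith)
  -- conditional expectation of the inner integral vanishes
  let J : Ω → ℝ := fun ω => ∫ r in Ioc s T, F r ω
  have hJint : Integrable J μ := hFint.integral_prod_right
  have hzero : ∀ᵐ r ∂(volume.restrict (Ioc s T)), ∀ B, MeasurableSet[ℱ s] B →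
      ∫ ω in B, F r ω ∂μ = 0 := by
    filter_upwards [hFint.prod_right_ae, ae_restrict_mem measurableSet_Ioc] with r hFr hr B hB
    have hr' : r ∈ Icc s T := ⟨hr.1.le, hr.2⟩
    have hD : StronglyMeasurable[ℱ r]
        (fun ω => H r ω * Real.exp (-∫ u in s..r, H u ω)) :=
      (hHm r hr').mul (Real.continuous_exp.comp_stronglyMeasurable (hZm r hr').neg)
    have hB' : MeasurableSet[ℱ r] B := ℱ.mono hr'.1 _ hB
    have hsub : Integrable (fun ω => G T ω - (∫ u in r..T, H u ω * G u ω) - G r ω) μ :=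
      (hΦint r hr').sub (hGint r hr')
    have hc0 : μ[fun ω => G T ω - (∫ u in r..T, H u ω * G u ω) - G r ω | ℱ r] =ᵐ[μ] 0 := by
      have e1 := condExp_sub (hΦint r hr') (hGint r hr') (ℱ r)
      have e2 : μ[G r | ℱ r] =ᵐ[μ] G r := by
        refine (condExp_congr_ae (hrec r hr')).trans ?_
        refine (condExp_condExp_of_le le_rfl (ℱ.le r)).trans (hrec r hr').symm
      filter_upwards [e1, e2, hrec r hr'] with ω h1 h2 h3
      refine h1.trans ?_
      simp only [Pi.sub_apply, Pi.zero_apply]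
      rw [h2, ← h3, sub_self]
    have hpull := condExp_mul_of_stronglyMeasurable_left (μ := μ) hD
      (show Integrable ((fun ω => H r ω * Real.exp (-∫ u in s..r, H u ω)) *
        (fun ω => G T ω - (∫ u in r..T, H u ω * G u ω) - G r ω)) μ from hFr) hsub
    have hF0 : μ[F r | ℱ r] =ᵐ[μ] 0 := by
      refine Filter.EventuallyEq.trans hpull ?_
      filter_upwards [hc0] with ω h1
      simp [h1]
    rw [← setIntegral_condExp (ℱ.le r) (show Integrable (F r) μ from hFr) hB']
    rw [setIntegral_congr_ae (g := fun _ => 0) ((ℱ.le r) _ hB')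
      (hF0.mono fun ω h _ => h)]
    simp
  have hJ0 : (0 : Ω → ℝ) =ᵐ[μ] μ[J | ℱ s] := by
    refine ae_eq_condExp_of_forall_setIntegral_eq (ℱ.le s) hJint
      (fun _ _ _ => integrableOn_zero) (fun B hB _ => ?_)
      stronglyMeasurable_zero.aestronglyMeasurable
    have hsw : ∫ ω in B, J ω ∂μ = ∫ r in Ioc s T, ∫ ω in B, F r ω ∂μ := by
      refine (integral_integral_swap (f := F) ?_).symm
      have := hFint.integrableOn (s := univ ×ˢ B)
      rw [IntegrableOn, ← Measure.prod_restrict, Measure.restrict_univ] at this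
      exact this
    rw [hsw, integral_congr_ae (g := fun _ => 0) (hzero.mono fun r h => h B hB)]
    simp
  have hfin : (fun ω => G T ω * Real.exp (-∫ u in s..T, H u ω)) =ᵐ[μ]
      (fun ω => G T ω - ∫ u in s..T, H u ω * G u ω) - J := by
    filter_upwards [hHi] with ω h1
    have := (path_id h1 (hGc ω)).2
    rw [intervalIntegral.integral_of_le hsT] at this
    simp only [Pi.sub_apply, J, F]
    rw [this]; ring
  have e1 := condExp_sub (hΦint s hsm) hJint (ℱ s)
  filter_upwards [hrec s hsm, hJ0, e1, condExp_congr_ae (m := ℱ s) hfin] with ω h1 h2 h3 h4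
  rw [h4, h3, Pi.sub_apply, ← h1, ← h2]; simp

theorem condexp_iteration
    {Ω : Type*} {m0 : MeasurableSpace Ω} (μ : Measure Ω) [IsProbabilityMeasure μ]
    (ℱ : Filtration ℝ m0)
    (t₀ T : ℝ) (ht₀ : 0 ≤ t₀) (ht₀T : t₀ < T)
    (h g : ℝ → Ω → ℝ)
    (hprog : ProgMeasurable ℱ h)
    (hint : ∀ᵐ ω ∂μ, IntegrableOn (fun r => |h r ω|) (Icc t₀ T))
    (hgadapt : Adapted ℱ g)
    (hgcont : ∀ᵐ ω ∂μ, ContinuousOn (fun s => g s ω) (Icc t₀ T))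
    (hgint : Integrable (fun ω =>
      (⨆ s : Icc t₀ T, |g (s : ℝ) ω|) *
        Real.exp (∫ r in t₀..T, |h r ω|)) μ)
    (hrec : ∀ s ∈ Icc t₀ T, g s =ᵐ[μ]
      μ[fun ω => g T ω - ∫ r in s..T, h r ω * g r ω | ℱ s]) :
    ∀ s ∈ Icc t₀ T, g s =ᵐ[μ]
      μ[fun ω => g T ω * Real.exp (-∫ r in s..T, h r ω) | ℱ s] := by
  intro s hs
  -- progressive measurability at time `r`, with the time variable extended to all of `ℝ`
  have hmin : ∀ r, @Measurable (ℝ × Ω) ℝ (@Prod.instMeasurableSpace _ _ _ (ℱ r)) _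
      (Function.uncurry fun u ω => h (min u r) ω) := by
    intro r
    let _ : MeasurableSpace Ω := ℱ r
    have h1 : Measurable (fun p : Iic r × Ω => h p.1 p.2) := (hprog r).measurable
    have h2 : Measurable (fun p : ℝ × Ω => ((⟨min p.1 r, mem_Iic.2 (min_le_right _ _)⟩ : Iic r), p.2)) :=
      ((measurable_fst.min measurable_const).subtype_mk).prodMk measurable_snd
    exact h1.comp h2
  obtain ⟨A, hAmem, hAm, hA⟩ := hgcont.exists_measurable_mem
  let G : ℝ → Ω → ℝ := fun r => A.indicator (g (projIcc t₀ T ht₀T.le r))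
  let H : ℝ → Ω → ℝ := fun r ω => h (min r T) ω
  have hHeq : ∀ r ≤ T, ∀ ω, H r ω = h r ω := fun r hr ω => by simp only [H, min_eq_left hr]
  have hGeq : ∀ ω ∈ A, ∀ r ∈ Icc t₀ T, G r ω = g r ω := fun ω hω r hr => by
    simp only [G, indicator_of_mem hω, projIcc_of_mem ht₀T.le hr]
  have hGc : ∀ ω, Continuous fun r => G r ω := by
    intro ω
    by_cases hω : ω ∈ A
    · simp only [G, indicator_of_mem hω]
      exact (continuousOn_iff_continuous_domRestrict.1 (hA ω hω)).comp continuous_projIcc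
    · simp only [G, indicator_of_notMem hω]
      exact continuous_const
  have hG : Measurable (Function.uncurry G) :=
    measurable_uncurry_of_continuous_of_measurable hGc fun r =>
      ((hgadapt _).mono (ℱ.le _) le_rfl).indicator hAm
  have hH : Measurable (Function.uncurry H) :=
    (hmin T).mono (sup_le_sup le_rfl (MeasurableSpace.comap_mono (ℱ.le T))) le_rfl
  have hHr : ∀ r, Measurable (fun ω => H r ω) := fun r => hH.comp measurable_prodMk_left
  have hHω : ∀ ω, Measurable (fun r => H r ω) := fun ω => hH.comp measurable_prodMk_right
  have hI0 : ∀ᵐ ω ∂μ, IntervalIntegrable (fun r => H r ω) volume t₀ T := by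
    filter_upwards [hint] with ω h1
    rw [intervalIntegrable_iff_integrableOn_Icc_of_le ht₀T.le]
    refine (integrable_norm_iff (hHω ω).aestronglyMeasurable).1 ?_
    refine h1.congr_fun (fun r hr => ?_) measurableSet_Icc
    simp only [Real.norm_eq_abs, hHeq r hr.2]
  have hsub : uIcc s T ⊆ uIcc t₀ T := by
    rw [uIcc_of_le hs.2, uIcc_of_le ht₀T.le]; exact Icc_subset_Icc hs.1 le_rfl
  have hint_h : ∀ a ≤ T, ∀ b ≤ T, ∀ ω, ∫ u in a..b, H u ω = ∫ u in a..b, h u ω := by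
    intro a ha b hb ω
    refine intervalIntegral.integral_congr fun u hu => hHeq u ?_ ω
    exact hu.2.trans (max_le ha hb)
  have hGg : ∀ r ∈ Icc t₀ T, G r =ᵐ[μ] g r := fun r hr => by
    filter_upwards [hAmem] with ω hω using hGeq ω hω r hr
  have key := core μ ℱ s T hs.2 H G hH hG hGc (fun ω => ⨆ s : Icc t₀ T, |g (s : ℝ) ω|) _
    (by
      filter_upwards [hAmem] with ω hω r hr
      have hr' : r ∈ Icc t₀ T := ⟨hs.1.trans hr.1, hr.2⟩
      rw [hGeq ω hω r hr']
      refine le_ciSup (f := fun s : Icc t₀ T => |g (s : ℝ) ω|) ?_ ⟨r, hr'⟩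
      have hb := isCompact_Icc.bddAbove_image (hA ω hω).abs
      refine hb.mono ?_
      rintro _ ⟨x, rfl⟩
      exact ⟨x, x.2, rfl⟩)
    (hI0.mono fun ω h1 => h1.mono_set hsub) hgint
    (by
      filter_upwards [hI0] with ω h1
      have hle : ∫ r in s..T, |H r ω| ≤ ∫ r in t₀..T, |h r ω| := by
        have e : ∫ r in t₀..T, |h r ω| = ∫ r in t₀..T, |H r ω| := by
          refine intervalIntegral.integral_congr fun u hu => ?_
          rw [uIcc_of_le ht₀T.le] at hu
          simp only [hHeq u hu.2]
        rw [e]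
        exact intervalIntegral.integral_mono_interval hs.1 hs.2 le_rfl
          (Filter.Eventually.of_forall fun _ => abs_nonneg _) h1.abs
      have h0 : 0 ≤ ⨆ s : Icc t₀ T, |g (s : ℝ) ω| := Real.iSup_nonneg fun _ => abs_nonneg _
      gcongr)
    (by
      intro r hr
      have : H r = h r := funext (hHeq r hr.2)
      rw [this]
      exact IsStronglyProgressive.stronglyAdapted hprog r)
    (by
      intro r hr
      have h1 := @meas_int Ω (ℱ r) _ (hmin r) s
      have h2 : StronglyMeasurable[ℱ r] (fun ω => ∫ u in s..r, h (min u r) ω) := by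
        let _ : MeasurableSpace Ω := ℱ r
        exact h1.comp_measurable (measurable_prodMk_left (x := r))
      convert h2 using 2 with ω
      refine intervalIntegral.integral_congr fun u hu => ?_
      rw [uIcc_of_le hr.1] at hu
      simp only [hHeq u (hu.2.trans hr.2), min_eq_left hu.2])
    (by
      intro r hr
      have hr' : r ∈ Icc t₀ T := ⟨hs.1.trans hr.1, hr.2⟩
      refine (hGg r hr').trans ((hrec r hr').trans (condExp_congr_ae ?_))
      filter_upwards [hAmem] with ω hω
      rw [hGeq ω hω T ⟨ht₀T.le, le_rfl⟩]
      congr 1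
      refine intervalIntegral.integral_congr fun u hu => ?_
      rw [uIcc_of_le hr.2] at hu
      simp only [hHeq u hu.2, hGeq ω hω u ⟨hr'.1.trans hu.1, hu.2⟩])
  refine (hGg s hs).symm.trans (key.trans (condExp_congr_ae ?_))
  filter_upwards [hAmem] with ω hω
  rw [hGeq ω hω T ⟨ht₀T.le, le_rfl⟩, hint_h s hs.2 T le_rfl]
end

section
/- Let (Ω, 𝓕, (𝓕_t)_{t≥0}, P) be a filtered probability space, let ξ ≥ 0 be an integrable random variable, and let (y_t)_{t≥0} be an adapted real-valued process with almost surely continuous paths such that for every t ≥ 0, |y_t| ≤ E[ξ | 𝓕_t] almost surely. Then for every β ∈ (0,1), E[ sup_{t≥0} |y_t|^β ] ≤ (1/(1−β)) · (E[ξ])^β. -/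
open MeasureTheory Set
open scoped MeasureTheory ENNReal

theorem aux_finite
    {Ω : Type*} {m0 : MeasurableSpace Ω} (μ : Measure Ω) [IsProbabilityMeasure μ]
    (ℱ : Filtration ℝ m0)
    (ξ : Ω → ℝ) (hξint : Integrable ξ μ)
    (y : ℝ → Ω → ℝ) (hadapt : Adapted ℱ y)
    (hbound : ∀ t : ℝ, 0 ≤ t → ∀ᵐ ω ∂μ, |y t ω| ≤ (μ[ξ | ℱ t]) ω)
    (c : ℝ) (F : Finset ℝ) (hF : ∀ t ∈ F, 0 ≤ t) :
    c * μ.real (⋃ t ∈ F, {ω | c ≤ |y t ω|}) ≤ ∫ ω in (⋃ t ∈ F, {ω | c ≤ |y t ω|}), ξ ω ∂μ := by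
  have hm : ∀ t, MeasurableSet[ℱ t] {ω | c ≤ |y t ω|} := fun t => by
    have h1 : Measurable[ℱ t] (fun ω => |y t ω|) := by
      have := hadapt t
      fun_prop
    exact h1 measurableSet_Ici
  induction F using Finset.induction_on_max with
  | empty => simp
  | insert a s ha ih =>
    specialize ih (fun t ht => hF t (Finset.mem_insert_of_mem ht))
    set A := ⋃ t ∈ s, {ω | c ≤ |y t ω|} with hA
    have hAm : MeasurableSet[ℱ a] A := by
      refine MeasurableSet.biUnion s.countable_toSet fun t ht => ?_
      exact ℱ.mono (ha t ht).le _ (hm t)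
    have hBm : MeasurableSet[ℱ a] ({ω | c ≤ |y a ω|} \ A) := (hm a).diff hAm
    set B := {ω | c ≤ |y a ω|} \ A with hB
    have hU : (⋃ t ∈ insert a s, {ω | c ≤ |y t ω|}) = A ∪ B := by
      rw [Finset.set_biUnion_insert, hB, union_sdiff_self, union_comm]
    have hd : Disjoint A B := disjoint_sdiff_right
    have hBm' := ℱ.le a _ hBm
    rw [hU, measureReal_union (h₁ := measure_ne_top _ _) (h₂ := measure_ne_top _ _) hd hBm', setIntegral_union hd hBm' hξint.integrableOn hξint.integrableOn,
      mul_add]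
    refine add_le_add ih ?_
    rw [← setIntegral_condExp (ℱ.le a) hξint hBm]
    have : c * μ.real B = ∫ ω in B, c ∂μ := by simp [mul_comm]
    rw [this]
    refine setIntegral_mono_on_ae (by simp) integrable_condExp.integrableOn hBm' ?_
    filter_upwards [hbound a (hF a (Finset.mem_insert_self _ _))] with ω h1 h2
    exact le_trans h2.1 h1

theorem aux_tail
    {Ω : Type*} {m0 : MeasurableSpace Ω} (μ : Measure Ω) [IsProbabilityMeasure μ]
    (ℱ : Filtration ℝ m0)
    (ξ : Ω → ℝ) (hξ0 : ∀ ω, 0 ≤ ξ ω) (hξint : Integrable ξ μ)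
    (y : ℝ → Ω → ℝ) (hadapt : Adapted ℱ y)
    (hbound : ∀ t : ℝ, 0 ≤ t → ∀ᵐ ω ∂μ, |y t ω| ≤ (μ[ξ | ℱ t]) ω)
    (c : ℝ) (hc : 0 < c) (d : ℕ → Ici (0 : ℝ)) :
    μ (⋃ n, {ω | c ≤ |y (d n) ω|}) ≤ ENNReal.ofReal ((∫ ω, ξ ω ∂μ) / c) := by
  rw [measure_iUnion_eq_iSup_accumulate]
  refine iSup_le fun n => ?_
  have h := aux_finite μ ℱ ξ hξint y hadapt hbound c
    ((Finset.range (n + 1)).image fun k => (d k : ℝ)) (by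
      intro t ht
      obtain ⟨k, -, rfl⟩ := Finset.mem_image.1 ht
      exact (d k).2)
  have he : (⋃ t ∈ (Finset.range (n + 1)).image fun k => (d k : ℝ), {ω | c ≤ |y t ω|})
      = Set.accumulate (fun n => {ω | c ≤ |y (d n) ω|}) n := by
    ext ω
    simp [Set.mem_accumulate]
  rw [he] at h
  have h2 := h.trans (setIntegral_le_integral hξint (Filter.Eventually.of_forall hξ0))
  rw [← ENNReal.ofReal_toReal (measure_ne_top μ (Set.accumulate _ n))]
  apply ENNReal.ofReal_le_ofReal
  rw [le_div_iff₀ hc, mul_comm]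
  exact h2

theorem aux_calc (A β : ℝ) (hA : 0 ≤ A) (hβ : β ∈ Ioo (0 : ℝ) 1) (G : ℝ → ℝ≥0∞)
    (h1 : ∀ t, G t ≤ 1) (h2 : ∀ t, 0 < t → G t ≤ ENNReal.ofReal (A / t)) :
    ENNReal.ofReal β * ∫⁻ t in Ioi 0, G t * ENNReal.ofReal (t ^ (β - 1)) ≤
      ENNReal.ofReal ((1 / (1 - β)) * A ^ β) := by
  obtain ⟨hb0, hb1⟩ := hβ
  rcases hA.eq_or_lt with rfl | hA
  · have : ∫⁻ t in Ioi 0, G t * ENNReal.ofReal (t ^ (β - 1)) = 0 := by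
      rw [setLIntegral_congr_fun (g := fun _ => 0) measurableSet_Ioi]
      · simp
      · intro t ht
        have := h2 t ht
        simp at this
        simp [this]
    simp [this]
  have e1 : ∫⁻ t in Ioc 0 A, G t * ENNReal.ofReal (t ^ (β - 1)) ≤ ENNReal.ofReal (A ^ β / β) := by
    calc _ ≤ ∫⁻ t in Ioc 0 A, ENNReal.ofReal (t ^ (β - 1)) := by
          refine lintegral_mono fun t => ?_
          calc _ ≤ 1 * ENNReal.ofReal (t ^ (β - 1)) := by gcongr; exact h1 t
            _ = _ := one_mul _
      _ = ENNReal.ofReal (∫ t in Ioc 0 A, t ^ (β - 1)) := by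
          rw [ofReal_integral_eq_lintegral_ofReal]
          · exact (intervalIntegrable_iff_integrableOn_Ioc_of_le hA.le).1
              (intervalIntegral.intervalIntegrable_rpow' (by linarith))
          · filter_upwards [ae_restrict_mem measurableSet_Ioc] with t ht
            exact Real.rpow_nonneg ht.1.le _
      _ ≤ _ := by
          rw [← intervalIntegral.integral_of_le hA.le, integral_rpow (Or.inl (by linarith))]
          simp [Real.zero_rpow hb0.ne']
  have e2 : ∫⁻ t in Ioi A, G t * ENNReal.ofReal (t ^ (β - 1)) ≤
      ENNReal.ofReal (A ^ β / (1 - β)) := by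
    calc _ ≤ ∫⁻ t in Ioi A, ENNReal.ofReal (A * t ^ (β - 2)) := by
          refine setLIntegral_mono' measurableSet_Ioi fun t ht => ?_
          have ht0 : 0 < t := hA.trans ht
          calc _ ≤ ENNReal.ofReal (A / t) * ENNReal.ofReal (t ^ (β - 1)) := by
                gcongr; exact h2 t ht0
            _ = _ := by
                rw [← ENNReal.ofReal_mul (by positivity)]
                congr 1
                rw [show β - 2 = (β - 1) - 1 by ring, Real.rpow_sub_one ht0.ne' (β - 1)]
                field_simp
      _ = ENNReal.ofReal (∫ t in Ioi A, A * t ^ (β - 2)) := by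
          rw [ofReal_integral_eq_lintegral_ofReal]
          · exact (integrableOn_Ioi_rpow_of_lt (by linarith) hA).const_mul A
          · filter_upwards [ae_restrict_mem measurableSet_Ioi] with t ht
            have ht0 : 0 < t := hA.trans ht
            simp only [Pi.zero_apply]
            positivity
      _ ≤ _ := by
          rw [integral_const_mul, integral_Ioi_rpow_of_lt (by linarith) hA]
          apply ENNReal.ofReal_le_ofReal
          rw [show β - 2 + 1 = β - 1 by ring, Real.rpow_sub_one hA.ne']
          have : 1 - β ≠ 0 := by linarith
          have : β - 1 ≠ 0 := by linarith
          apply le_of_eq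
          rw [← neg_sub 1 β]
          field_simp
  rw [← Ioc_union_Ioi_eq_Ioi hA.le, lintegral_union measurableSet_Ioi (Ioc_disjoint_Ioi le_rfl)]
  have hp : 0 < 1 - β := by linarith
  calc _ ≤ ENNReal.ofReal β * (ENNReal.ofReal (A ^ β / β) + ENNReal.ofReal (A ^ β / (1 - β))) := by
        gcongr
    _ = _ := by
        rw [← ENNReal.ofReal_add (by positivity) (by positivity), ← ENNReal.ofReal_mul hb0.le]
        congr 1
        field_simp
        ring

/-- Doob-type estimate: if `|y_t| ≤ E[ξ | 𝓕_t]` a.s. for every `t ≥ 0`, with `ξ ≥ 0`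
integrable and `y` adapted with a.s. continuous paths, then for every `β ∈ (0,1)`,
`E[sup_{t ≥ 0} |y_t|^β] ≤ (1/(1−β))·(E[ξ])^β`. -/
theorem sup_power_estimate
    {Ω : Type*} {m0 : MeasurableSpace Ω} (μ : Measure Ω) [IsProbabilityMeasure μ]
    (ℱ : Filtration ℝ m0)
    (ξ : Ω → ℝ) (hξ0 : ∀ ω, 0 ≤ ξ ω) (hξint : Integrable ξ μ)
    (y : ℝ → Ω → ℝ) (hadapt : Adapted ℱ y)
    (hcont : ∀ᵐ ω ∂μ, ContinuousOn (fun t => y t ω) (Ici (0 : ℝ)))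
    (hbound : ∀ t : ℝ, 0 ≤ t → ∀ᵐ ω ∂μ, |y t ω| ≤ (μ[ξ | ℱ t]) ω)
    (β : ℝ) (hβ : β ∈ Ioo (0 : ℝ) 1) :
    ∫⁻ ω, ENNReal.ofReal ((⨆ t : Ici (0 : ℝ), |y (t : ℝ) ω|) ^ β) ∂μ ≤
      ENNReal.ofReal ((1 / (1 - β)) * (∫ ω, ξ ω ∂μ) ^ β) := by
  obtain ⟨d, hd⟩ := TopologicalSpace.exists_dense_seq (Ici (0 : ℝ))
  set Z : Ω → ℝ := fun ω => ⨆ n, |y (d n) ω| with hZ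
  have hZm : Measurable Z := by
    refine Measurable.iSup fun n => ?_
    have : Measurable (y (d n)) := (hadapt (d n)).mono (ℱ.le _) le_rfl
    fun_prop
  have hZ0 : ∀ ω, 0 ≤ Z ω := fun ω => Real.iSup_nonneg fun n => abs_nonneg _
  have hSZ : ∀ᵐ ω ∂μ, (⨆ t : Ici (0 : ℝ), |y (t : ℝ) ω|) ≤ Z ω := by
    filter_upwards [hcont] with ω hω
    by_cases hb : BddAbove (range fun t : Ici (0 : ℝ) => |y (t : ℝ) ω|)
    · have hb' : BddAbove (range fun n => |y (d n) ω|) :=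
        hb.mono (by rintro _ ⟨n, rfl⟩; exact ⟨d n, rfl⟩)
      refine ciSup_le fun t => ?_
      have hc : Continuous fun t : Ici (0 : ℝ) => |y (t : ℝ) ω| :=
        (continuousOn_iff_continuous_domRestrict.1 hω).abs
      exact hd.induction_on (p := fun t : Ici (0 : ℝ) => |y (t : ℝ) ω| ≤ Z ω) t
        (isClosed_le hc continuous_const) (fun n => le_ciSup hb' n)
    · rw [Real.iSup_of_not_bddAbove hb]
      exact hZ0 ω
  calc _ ≤ ∫⁻ ω, ENNReal.ofReal (Z ω ^ β) ∂μ := by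
        refine lintegral_mono_ae ?_
        filter_upwards [hSZ] with ω h
        exact ENNReal.ofReal_le_ofReal
          (Real.rpow_le_rpow (Real.iSup_nonneg fun n => abs_nonneg _) h hβ.1.le)
    _ = ENNReal.ofReal β * ∫⁻ t in Ioi 0, μ {ω | t < Z ω} * ENNReal.ofReal (t ^ (β - 1)) :=
        lintegral_rpow_eq_lintegral_meas_lt_mul μ (Filter.Eventually.of_forall hZ0)
          hZm.aemeasurable hβ.1
    _ ≤ _ := by
        refine aux_calc _ β (integral_nonneg hξ0) hβ _ (fun t => prob_le_one) fun t ht => ?_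
        refine le_trans (measure_mono ?_) (aux_tail μ ℱ ξ hξ0 hξint y hadapt hbound t ht d)
        intro ω hω
        obtain ⟨n, hn⟩ := exists_lt_of_lt_ciSup (show t < ⨆ n, |y (d n) ω| from hω)
        exact mem_iUnion.2 ⟨n, hn.le⟩
end
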